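/- Let S = k[x_1,…,x_n] be a polynomial ring over a field k, let q ≥ 1, let α_1,…,α_n be positive integers, and let l_1,…,l_q be monomials each divisible by x_n. Suppose M is the monomial ideal whose minimal monomial generating set is exactly G = {x_1^{α_1},…,x_n^{α_n}, l_1,…,l_q}. Then β_n(S/M) ≥ 2. -/

import Mathlib

/-!
If `r` is regular on `Y`, the mapping cone of multiplication by `r` on a projective resolution of
`Y` resolves `Y / r Y`. When the resolution of `Y` has length `n`, comparing the kernels of the last
differentials after tensoring with `A` gives `Tor (n + 1) A (Y / r Y) ≃ {t ∈ Tor n A Y | r t = 0}`.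
Iterating over the variables identifies `Tor N (S / M) k` with the socle
`{t ∈ S / M | x_i t = 0 for all i}`.

For a monomial ideal `M` the socle has a basis given by the standard monomials (those outside `M`)
that are maximal for divisibility, so `β_N(S / M)` counts these. If `M` contains a power of every
variable, every standard monomial divides a maximal one. If moreover `g` is a minimal generator
divisible by `x_i x_j` with `i ≠ j`, then the standard monomials `g / x_i` and `g / x_j` cannot
divide the same standard monomial, as `g` would divide it as well.
-/

open CategoryTheory MvPolynomial

/-- The monomial in `k[x_1,…,x_n]` with exponent vector `a : Fin n → ℕ`. -/
noncomputable def expMon (k : Type) [Field k] {n : ℕ} (a : Fin n → ℕ) :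
    MvPolynomial (Fin n) k :=
  monomial (Finsupp.equivFunOnFinite.symm a) 1

/-- The monomial ideal generated by the monomials with exponent vectors in `A`. -/
noncomputable def monIdeal (k : Type) [Field k] {n : ℕ} (A : Set (Fin n → ℕ)) :
    Ideal (MvPolynomial (Fin n) k) :=
  Ideal.span (expMon k '' A)

/-- The projective dimension of a module, as a value in `ℕ∞`: the least `d` such that there is
a projective resolution vanishing in homological degrees `> d`. -/
noncomputable def projDim (R : Type) [Ring R] (N : ModuleCat R) : ℕ∞ :=
  sInf {d : ℕ∞ | ∃ P : ProjectiveResolution N,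
    ∀ i : ℕ, d < (i : ℕ∞) → Limits.IsZero (P.complex.X i)}

/-- `pd(S/M)`, the projective dimension of `S/M` as an `S`-module. -/
noncomputable def pdQuot (k : Type) [Field k] {n : ℕ} (M : Ideal (MvPolynomial (Fin n) k)) : ℕ∞ :=
  projDim (MvPolynomial (Fin n) k)
    (ModuleCat.of (MvPolynomial (Fin n) k) (MvPolynomial (Fin n) k ⧸ M))

/-- The `i`-th Betti number of `S/M`, i.e. `dim_k Tor_i^S(S/M, k)`, where the residue field
`k = S/(x_1,…,x_n)` and the `k`-vector space structure on `Tor` comes from the base field. -/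
noncomputable def betti (k : Type) [Field k] {n : ℕ} (M : Ideal (MvPolynomial (Fin n) k))
    (i : ℕ) : ℕ :=
  Module.finrank k
    ((ModuleCat.restrictScalars (algebraMap k (MvPolynomial (Fin n) k))).obj
      (((Tor (ModuleCat (MvPolynomial (Fin n) k)) i).obj
          (ModuleCat.of _ (MvPolynomial (Fin n) k ⧸ M))).obj
        (ModuleCat.of _ (MvPolynomial (Fin n) k ⧸
          Ideal.span (Set.range (X : Fin n → MvPolynomial (Fin n) k))))))

universe u v

section ProjectiveResolution

variable {C : Type u} [Category.{v} C] [Abelian C]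

/-- The projective resolution of `Z` given by an exact augmented complex of projectives
`⋯ ⟶ K₁ ⟶ K₀ ⟶ Z ⟶ 0`. -/
noncomputable def projectiveResolutionOfExact (K : ChainComplex C ℕ) [∀ j, Projective (K.X j)]
    {Z : C} (π : K.X 0 ⟶ Z) [Epi π] (w : K.d 1 0 ≫ π = 0) (h₀ : (ShortComplex.mk _ _ w).Exact)
    (h : ∀ j, K.ExactAt (j + 1)) : ProjectiveResolution Z where
  complex := K
  π := (ChainComplex.toSingle₀Equiv _ _).symm ⟨π, w⟩
  quasiIso := ⟨fun j => by
    cases j with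
    | zero =>
      rw [ChainComplex.quasiIsoAt₀_iff, ShortComplex.quasiIso_iff_of_zeros' _
        (K.shape 0 0 (by simp)) rfl rfl]
      refine (ShortComplex.exact_and_epi_g_iff_of_iso ?_).2 ⟨h₀, ‹Epi π›⟩
      exact ShortComplex.isoMk (Iso.refl _) (Iso.refl _) (Iso.refl _)
        ((Category.id_comp _).trans (Category.comp_id _).symm)
        ((Category.id_comp _).trans ((Category.comp_id _).trans
          (ChainComplex.toSingle₀Equiv_symm_apply_f_zero π w)).symm)
    | succ j =>
      rw [quasiIsoAt_iff_exactAt' _ _ (ChainComplex.exactAt_succ_single_obj ..)]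
      exact h j⟩

end ProjectiveResolution

section MappingCone

open HomologicalComplex Pointwise

variable {R : Type u} [CommRing R]

/-- The terms `K_j ⊕ K_{j-1}` of the mapping cone of multiplication by a scalar on `K`. -/
abbrev smulConeX (K : ChainComplex (ModuleCat.{u} R) ℕ) : ℕ → ModuleCat.{u} R
  | 0 => K.X 0
  | j + 1 => ModuleCat.of R (K.X (j + 1) × K.X j)

/-- The differentials `(x, y) ↦ (dx + r y, -dy)` of the mapping cone of multiplication by `r`. -/
noncomputable def smulConeD (K : ChainComplex (ModuleCat.{u} R) ℕ) (r : R) :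
    ∀ j, smulConeX K (j + 1) →ₗ[R] smulConeX K j
  | 0 => (K.d 1 0).hom.coprod (r • LinearMap.id)
  | j + 1 => ((K.d (j + 1 + 1) (j + 1)).hom.coprod (r • LinearMap.id)).prod
      (-((K.d (j + 1) j).hom ∘ₗ LinearMap.snd R _ _))

lemma d_hom_d_hom (K : ChainComplex (ModuleCat.{u} R) ℕ) (i j l : ℕ) (x : K.X i) :
    (K.d j l).hom ((K.d i j).hom x) = 0 := by
  rw [← LinearMap.comp_apply, ← ModuleCat.hom_comp, K.d_comp_d]; rfl

lemma smulConeD_smulConeD (K : ChainComplex (ModuleCat.{u} R) ℕ) (r : R) (j : ℕ)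
    (x : smulConeX K (j + 1 + 1)) :
    smulConeD K r j (smulConeD K r (j + 1) x) = 0 := by
  cases j with
  | zero => simp [smulConeD, d_hom_d_hom]
  | succ j => simp [smulConeD, d_hom_d_hom]

/-- The mapping cone of multiplication by `r` on `K`. -/
noncomputable def smulCone (K : ChainComplex (ModuleCat.{u} R) ℕ) (r : R) :
    ChainComplex (ModuleCat.{u} R) ℕ :=
  ChainComplex.of (smulConeX K) (fun j => ModuleCat.ofHom (smulConeD K r j)) fun j =>
    ModuleCat.hom_ext (LinearMap.ext (smulConeD_smulConeD K r j))

lemma smulCone_d_hom (K : ChainComplex (ModuleCat.{u} R) ℕ) (r : R) (j : ℕ) :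
    ((smulCone K r).d (j + 1) j).hom = smulConeD K r j := by
  let d (j : ℕ) : smulConeX K (j + 1) ⟶ smulConeX K j := ModuleCat.ofHom (smulConeD K r j)
  exact congrArg ModuleCat.Hom.hom (ChainComplex.of_d (smulConeX K) d j)

instance projective_smulCone_X (K : ChainComplex (ModuleCat.{u} R) ℕ)
    [∀ j, Projective (K.X j)] (r : R) (j : ℕ) : Projective ((smulCone K r).X j) := by
  have (j : ℕ) : Module.Projective R (K.X j) :=
    (IsProjective.iff_projective (R := R) _).2 inferInstance
  refine (IsProjective.iff_projective (R := R) (smulConeX K j)).1 ?_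
  cases j <;> infer_instance

lemma exactAt_succ_iff {K : ChainComplex (ModuleCat.{u} R) ℕ} {j : ℕ} :
    K.ExactAt (j + 1) ↔
      ∀ x, (K.d (j + 1) j).hom x = 0 → ∃ y, (K.d (j + 1 + 1) (j + 1)).hom y = x := by
  rw [exactAt_iff' _ (j + 1 + 1) (j + 1) j (by simp) (by simp), ShortComplex.moduleCat_exact_iff]
  rfl

variable {Y : ModuleCat.{u} R} (P : ProjectiveResolution Y)

/-- The augmentation map `P₀ → Y` of a projective resolution, as a linear map. -/
noncomputable def augmentation : P.complex.X 0 →ₗ[R] Y := (P.π.f 0).hom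

lemma augmentation_surjective : Function.Surjective (augmentation P) :=
  (ModuleCat.epi_iff_surjective (P.π.f 0)).1 inferInstance

lemma augmentation_d (y : P.complex.X 1) : augmentation P ((P.complex.d 1 0).hom y) = 0 :=
  LinearMap.congr_fun (congrArg ModuleCat.Hom.hom P.complex_d_comp_π_f_zero) y

lemma augmentation_eq_zero_iff (x : P.complex.X 0) :
    augmentation P x = 0 ↔ ∃ y, (P.complex.d 1 0).hom y = x := by
  refine ⟨(ShortComplex.moduleCat_exact_iff _).1 P.exact₀ x, ?_⟩
  rintro ⟨y, rfl⟩
  exact augmentation_d P y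

lemma exists_d_eq_of_d_eq_zero {j : ℕ} {x : P.complex.X (j + 1)}
    (hx : (P.complex.d (j + 1) j).hom x = 0) :
    ∃ y, (P.complex.d (j + 1 + 1) (j + 1)).hom y = x :=
  exactAt_succ_iff.1 (P.complex_exactAt_succ j) x hx

lemma mkQ_augmentation_eq_zero_iff (r : R) (x : P.complex.X 0) :
    (r • ⊤ : Submodule R Y).mkQ (augmentation P x) = 0 ↔
      ∃ y, smulConeD P.complex r 0 y = x := by
  rw [Submodule.mkQ_apply, Submodule.Quotient.mk_eq_zero,
    Submodule.mem_smul_pointwise_iff_exists]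
  constructor
  · rintro ⟨y, -, hy⟩
    obtain ⟨b, rfl⟩ := augmentation_surjective P y
    obtain ⟨a, ha⟩ := (augmentation_eq_zero_iff P (x - r • b)).1
      (by rw [map_sub, map_smul, hy, sub_self])
    exact ⟨(a, b), by simp [smulConeD, ha]⟩
  · rintro ⟨⟨a, b⟩, rfl⟩
    refine ⟨augmentation P b, trivial, ?_⟩
    simp [smulConeD, augmentation_d]

lemma exists_smulConeD_eq {r : R} (hr : IsSMulRegular Y r) {j : ℕ}
    (x : smulConeX P.complex (j + 1)) (hx : smulConeD P.complex r j x = 0) :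
    ∃ y, smulConeD P.complex r (j + 1) y = x := by
  obtain ⟨a, b⟩ := x
  obtain ⟨c, rfl⟩ : ∃ c, (P.complex.d (j + 1) j).hom c = b := by
    cases j with
    | zero =>
      refine (augmentation_eq_zero_iff P b).1 (hr.right_eq_zero_of_smul ?_)
      have h : (P.complex.d 1 0).hom a + r • b = 0 := hx
      calc r • augmentation P b
          = augmentation P ((P.complex.d 1 0).hom a + r • b) := by
            rw [map_add, augmentation_d, zero_add, map_smul]
        _ = 0 := by rw [h, map_zero]
    | succ j => exact exists_d_eq_of_d_eq_zero P (neg_eq_zero.1 (congrArg Prod.snd hx))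
  have hx' : (P.complex.d (j + 1) j).hom (a + r • c) = 0 := by
    cases j with
    | zero => simpa [smulConeD] using hx
    | succ j => simpa [smulConeD] using congrArg Prod.fst hx
  obtain ⟨e, he⟩ := exists_d_eq_of_d_eq_zero P hx'
  exact ⟨(e, -c), by simp [smulConeD, he]⟩

/-- The mapping cone of multiplication by a regular element `r` on a projective resolution of `Y`,
as a projective resolution of `Y / r Y`. -/
noncomputable def smulConeResolution {r : R} (hr : IsSMulRegular Y r) :
    ProjectiveResolution (ModuleCat.of R (QuotSMulTop r Y)) :=
  let π : (smulCone P.complex r).X 0 ⟶ ModuleCat.of R (QuotSMulTop r Y) :=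
    ModuleCat.ofHom ((r • ⊤ : Submodule R Y).mkQ ∘ₗ augmentation P)
  have hπ (x) : π.hom x = 0 ↔ ∃ y, ((smulCone P.complex r).d 1 0).hom y = x := by
    rw [smulCone_d_hom]
    exact mkQ_augmentation_eq_zero_iff P r x
  have : Epi π := (ModuleCat.epi_iff_surjective π).2
    ((Submodule.mkQ_surjective _).comp (augmentation_surjective P))
  projectiveResolutionOfExact (smulCone P.complex r) π
    (ModuleCat.hom_ext (LinearMap.ext fun y => (hπ _).2 ⟨y, rfl⟩))
    ((ShortComplex.moduleCat_exact_iff _).2 fun x => (hπ x).1)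
    (fun j => exactAt_succ_iff.2 (by
      rw [smulCone_d_hom, smulCone_d_hom]
      exact exists_smulConeD_eq P hr))

lemma isZero_smulConeResolution_X {r : R} (hr : IsSMulRegular Y r) {n : ℕ}
    (hP : ∀ j, n < j → Limits.IsZero (P.complex.X j)) (j : ℕ) (hj : n + 1 < j) :
    Limits.IsZero ((smulConeResolution P hr).complex.X j) := by
  obtain ⟨j, rfl⟩ := Nat.exists_eq_succ_of_ne_zero (Nat.ne_zero_of_lt hj)
  have := ModuleCat.subsingleton_of_isZero (hP (j + 1) (by omega))
  have := ModuleCat.subsingleton_of_isZero (hP j (by omega))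
  exact ModuleCat.isZero_of_iff_subsingleton.2
    (inferInstanceAs (Subsingleton (P.complex.X (j + 1) × P.complex.X j)))

end MappingCone

section Tor

open MonoidalCategory TensorProduct

variable {R : Type u} [CommRing R]

lemma lTensor_prod_eq_zero_iff (A : Type*) {M N N' : Type*} [AddCommGroup A] [Module R A]
    [AddCommGroup M] [Module R M] [AddCommGroup N] [Module R N] [AddCommGroup N'] [Module R N']
    (f : M →ₗ[R] N) (g : M →ₗ[R] N') (z : A ⊗[R] M) :
    (f.prod g).lTensor A z = 0 ↔ f.lTensor A z = 0 ∧ g.lTensor A z = 0 := by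
  have h : (TensorProduct.prodRight R R A N N').toLinearMap ∘ₗ (f.prod g).lTensor A =
      (f.lTensor A).prod (g.lTensor A) := by
    ext <;> simp
  have hz : ((f.lTensor A z, g.lTensor A z) : (A ⊗[R] N) × (A ⊗[R] N')) =
      TensorProduct.prodRight R R A N N' ((f.prod g).lTensor A z) :=
    (LinearMap.congr_fun h z).symm
  rw [← Prod.mk_eq_zero, hz, LinearEquiv.map_eq_zero_iff]

-- For `n = 0` the map `K.d n (n - 1)` is `K.d 0 0 = 0`, so the second condition is empty.
lemma lTensor_smulConeD_inr_eq_zero_iff (A : Type u) [AddCommGroup A] [Module R A]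
    (K : ChainComplex (ModuleCat.{u} R) ℕ) (r : R) (n : ℕ) (z : A ⊗[R] K.X n) :
    (smulConeD K r n).lTensor A ((LinearMap.inr R (K.X (n + 1)) (K.X n)).lTensor A z) = 0 ↔
      r • z = 0 ∧ (K.d n (n - 1)).hom.lTensor A z = 0 := by
  rw [← LinearMap.lTensor_comp_apply]
  cases n with
  | zero =>
    have h : smulConeD K r 0 ∘ₗ LinearMap.inr R _ _ = r • LinearMap.id :=
      LinearMap.coprod_inr _ _
    rw [h]
    simp [LinearMap.lTensor_smul]
  | succ n =>
    have h : smulConeD K r (n + 1) ∘ₗ LinearMap.inr R _ _ =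
        (r • LinearMap.id).prod (-(K.d (n + 1) n).hom) := by
      ext x <;> simp [smulConeD]
    rw [h, lTensor_prod_eq_zero_iff]
    simp [LinearMap.lTensor_smul, LinearMap.lTensor_neg]

lemma exists_injective_tor_range_eq_ker (A : ModuleCat.{u} R) {Y : ModuleCat.{u} R}
    (P : ProjectiveResolution Y) {n : ℕ} (hP : Limits.IsZero (P.complex.X (n + 1))) :
    ∃ g : ((Tor (ModuleCat.{u} R) n).obj A).obj Y →ₗ[R] A ⊗[R] P.complex.X n,
      Function.Injective g ∧
        LinearMap.range g = LinearMap.ker ((P.complex.d n (n - 1)).hom.lTensor A) := by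
  let F := (tensoringLeft (ModuleCat.{u} R)).obj A
  let L := (F.mapHomologicalComplex (ComplexShape.down ℕ)).obj P.complex
  have hd : L.d (n + 1) n = 0 := by
    change F.map (P.complex.d (n + 1) n) = 0
    rw [hP.eq_zero_of_src (P.complex.d (n + 1) n), F.map_zero]
  let e : ((Tor (ModuleCat.{u} R) n).obj A).obj Y ≅ L.cycles n :=
    P.isoLeftDerivedObj F n ≪≫ (L.isoHomologyπ (n + 1) n (by simp) hd).symm
  have hker : (ShortComplex.mk _ _ (L.iCycles_d n (n - 1))).Exact :=
    ShortComplex.exact_of_f_is_kernel _ (L.cyclesIsKernel n (n - 1) (by cases n <;> simp))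
  refine ⟨(e.hom ≫ L.iCycles n).hom, (ModuleCat.mono_iff_injective _).1 inferInstance, ?_⟩
  exact (LinearMap.range_comp_of_range_eq_top (L.iCycles n).hom
    (LinearMap.range_eq_top.2 e.toLinearEquiv.surjective)).trans
    ((ShortComplex.moduleCat_exact_iff_range_eq_ker _).1 hker)

lemma exists_injective_range_eq_comap {M M' V : Type*} [AddCommGroup M] [Module R M]
    [AddCommGroup M'] [Module R M'] [AddCommGroup V] [Module R V] {φ : M →ₗ[R] V}
    {φ' : M' →ₗ[R] V} (hφ : Function.Injective φ) (hφ' : Function.Injective φ')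
    (h : LinearMap.range φ' ≤ LinearMap.range φ) :
    ∃ f : M' →ₗ[R] M, Function.Injective f ∧
      LinearMap.range f = (LinearMap.range φ').comap φ := by
  let e := LinearEquiv.ofInjective φ hφ
  let f : M' →ₗ[R] M := e.symm.toLinearMap ∘ₗ φ'.codRestrict _ fun x => h ⟨x, rfl⟩
  have hf (x) : φ (f x) = φ' x := congrArg Subtype.val (e.apply_symm_apply _)
  refine ⟨f, .of_comp (f := φ) (by simpa [Function.comp_def, hf] using hφ'), ?_⟩
  ext x
  simp [← hf, hφ.eq_iff]

lemma exists_injective_tor_quotSMulTop_range_eq_ker (A : ModuleCat.{u} R) {Y : ModuleCat.{u} R}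
    (P : ProjectiveResolution Y) {r : R} (hr : IsSMulRegular Y r) {n : ℕ}
    (hP : ∀ j, n < j → Limits.IsZero (P.complex.X j)) :
    ∃ g : ((Tor (ModuleCat.{u} R) (n + 1)).obj A).obj (ModuleCat.of R (QuotSMulTop r Y)) →ₗ[R]
        A ⊗[R] (P.complex.X (n + 1) × P.complex.X n),
      Function.Injective g ∧
        LinearMap.range g = LinearMap.ker ((smulConeD P.complex r n).lTensor A) := by
  have hd : ((smulConeResolution P hr).complex.d (n + 1) (n + 1 - 1)).hom =
      smulConeD P.complex r n := smulCone_d_hom P.complex r n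
  rw [← hd]
  exact exists_injective_tor_range_eq_ker A (smulConeResolution P hr)
    (isZero_smulConeResolution_X P hr hP (n + 2) (n + 1).lt_succ_self)

lemma exists_injective_tor_quotSMulTop (A : ModuleCat.{u} R) {Y : ModuleCat.{u} R}
    (P : ProjectiveResolution Y) {r : R} (hr : IsSMulRegular Y r) {n : ℕ}
    (hP : ∀ j, n < j → Limits.IsZero (P.complex.X j)) :
    ∃ f : ((Tor (ModuleCat.{u} R) (n + 1)).obj A).obj (ModuleCat.of R (QuotSMulTop r Y)) →ₗ[R]
        ((Tor (ModuleCat.{u} R) n).obj A).obj Y,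
      Function.Injective f ∧ LinearMap.range f = Submodule.torsionBy R _ r := by
  have hP' := hP (n + 1) n.lt_succ_self
  obtain ⟨g, hg, hg_range⟩ := exists_injective_tor_range_eq_ker A P hP'
  obtain ⟨g', hg', hg'_range⟩ := exists_injective_tor_quotSMulTop_range_eq_ker A P hr hP
  have := ModuleCat.subsingleton_of_isZero hP'
  let _ : Unique (P.complex.X (n + 1)) := uniqueOfSubsingleton 0
  let ι : A ⊗[R] P.complex.X n ≃ₗ[R] A ⊗[R] (P.complex.X (n + 1) × P.complex.X n) :=
    LinearEquiv.lTensor A LinearEquiv.uniqueProd.symm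
  have hι (z) : ι z ∈ LinearMap.range g' ↔
      r • z = 0 ∧ (P.complex.d n (n - 1)).hom.lTensor A z = 0 := by
    rw [hg'_range]
    exact lTensor_smulConeD_inr_eq_zero_iff A P.complex r n z
  have hle : LinearMap.range g' ≤ LinearMap.range (ι.toLinearMap ∘ₗ g) := by
    intro w hw
    obtain ⟨z, rfl⟩ := ι.surjective w
    obtain ⟨t, rfl⟩ := (hg_range ▸ ((hι z).1 hw).2 : z ∈ LinearMap.range g)
    exact ⟨t, rfl⟩
  obtain ⟨f, hf, hf_range⟩ :=
    exists_injective_range_eq_comap (φ := ι.toLinearMap ∘ₗ g) (ι.injective.comp hg) hg' hle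
  refine ⟨f, hf, hf_range.trans (Submodule.ext fun t => ?_)⟩
  have ht : (P.complex.d n (n - 1)).hom.lTensor A (g t) = 0 := hg_range.le ⟨t, rfl⟩
  change ι (g t) ∈ LinearMap.range g' ↔ r • t = 0
  rw [hι, and_iff_left ht, ← map_smul, map_eq_zero_iff g hg]

lemma torsionBySet_empty (M : Type*) [AddCommGroup M] [Module R M] :
    Submodule.torsionBySet R M ∅ = ⊤ :=
  Submodule.eq_top_iff'.2 fun _ => (Submodule.mem_torsionBySet_iff _ _).2 (fun a => a.2.elim)

lemma range_comp_eq_torsionBySet_union {M M' M'' : Type*} [AddCommGroup M] [Module R M]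
    [AddCommGroup M'] [Module R M'] [AddCommGroup M''] [Module R M''] {s t : Set R}
    {f : M →ₗ[R] M'} {g : M' →ₗ[R] M''} (hg : Function.Injective g)
    (hf_range : LinearMap.range f = Submodule.torsionBySet R M' t)
    (hg_range : LinearMap.range g = Submodule.torsionBySet R M'' s) :
    LinearMap.range (g ∘ₗ f) = Submodule.torsionBySet R M'' (s ∪ t) := by
  rw [LinearMap.range_comp, hf_range]
  ext x
  constructor
  · rintro ⟨y, hy, rfl⟩
    have hy' : g y ∈ Submodule.torsionBySet R M'' s := hg_range ▸ ⟨y, rfl⟩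
    simp only [SetLike.mem_coe, Submodule.mem_torsionBySet_iff, Subtype.forall, Set.mem_union] at *
    rintro r (hr | hr)
    · exact hy' r hr
    · rw [← map_smul, hy r hr, map_zero]
  · intro hx
    obtain ⟨y, rfl⟩ : x ∈ LinearMap.range g :=
      hg_range ▸ Submodule.torsionBySet_le_torsionBySet_of_subset Set.subset_union_left hx
    refine ⟨y, ?_, rfl⟩
    simp only [SetLike.mem_coe, Submodule.mem_torsionBySet_iff, Subtype.forall] at *
    exact fun r hr => hg (by rw [map_smul, hx r (.inr hr), map_zero])

/-- The isomorphism `Tor n A Y ≃ Tor n A Z` induced by an isomorphism `Y ≃ Z`. -/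
noncomputable def torCongr (A : ModuleCat.{u} R) (n : ℕ) {Y Z : Type u} [AddCommGroup Y]
    [Module R Y] [AddCommGroup Z] [Module R Z] (e : Y ≃ₗ[R] Z) :
    ((Tor (ModuleCat.{u} R) n).obj A).obj (ModuleCat.of R Y) ≃ₗ[R]
      ((Tor (ModuleCat.{u} R) n).obj A).obj (ModuleCat.of R Z) :=
  (((Tor (ModuleCat.{u} R) n).obj A).mapIso e.toModuleIso).toLinearEquiv

lemma ofList_smul_top (rs : List R) :
    (Ideal.ofList rs • ⊤ : Submodule R R) = Ideal.ofList rs := by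
  rw [smul_eq_mul, Ideal.mul_top]

lemma exists_injective_tor_of_isWeaklyRegular (A : ModuleCat.{u} R) {rs : List R} {n : ℕ}
    {Y : ModuleCat.{u} R} (P : ProjectiveResolution Y)
    (hP : ∀ j, n < j → Limits.IsZero (P.complex.X j))
    (hrs : RingTheory.Sequence.IsWeaklyRegular Y rs) :
    ∃ f : ((Tor (ModuleCat.{u} R) (rs.length + n)).obj A).obj
          (ModuleCat.of R (Y ⧸ (Ideal.ofList rs • ⊤ : Submodule R Y))) →ₗ[R]
        ((Tor (ModuleCat.{u} R) n).obj A).obj Y,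
      Function.Injective f ∧ LinearMap.range f = Submodule.torsionBySet R _ {r | r ∈ rs} := by
  induction rs generalizing n Y with
  | nil =>
    let e := torCongr A n (Submodule.quotEquivOfEqBot
      (Ideal.ofList ([] : List R) • ⊤ : Submodule R Y)
      (by rw [Ideal.ofList_nil, Submodule.bot_smul]))
    rw [List.length_nil, zero_add]
    refine ⟨e, e.injective, (LinearEquiv.range e).trans ?_⟩
    simp only [List.not_mem_nil, Set.ofPred_false, torsionBySet_empty]
  | cons r rs ih =>
    obtain ⟨hr, hrs⟩ := (RingTheory.Sequence.isWeaklyRegular_cons_iff Y r rs).1 hrs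
    obtain ⟨f, hf, hf_range⟩ :=
      ih (smulConeResolution P hr) (isZero_smulConeResolution_X P hr hP) hrs
    obtain ⟨g, hg, hg_range⟩ := exists_injective_tor_quotSMulTop A P hr hP
    let e := torCongr A (rs.length + (n + 1))
      (Submodule.quotOfListConsSMulTopEquivQuotSMulTopInner Y r rs)
    rw [List.length_cons, add_assoc, add_comm 1 n]
    refine ⟨(g ∘ₗ f) ∘ₗ e.toLinearMap, (hg.comp hf).comp e.injective, ?_⟩
    rw [LinearMap.range_comp_of_range_eq_top _ (LinearEquiv.range e),
      range_comp_eq_torsionBySet_union (s := {r}) hg hf_range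
        (hg_range.trans (Submodule.torsionBySet_singleton_eq _).symm)]
    simp only [List.mem_cons]
    rfl

lemma exists_injective_tor_quotient_ofList (A : ModuleCat.{u} R) {rs : List R}
    (hrs : RingTheory.Sequence.IsWeaklyRegular R rs) :
    ∃ f : ((Tor (ModuleCat.{u} R) rs.length).obj A).obj
          (ModuleCat.of R (R ⧸ Ideal.ofList rs)) →ₗ[R] A,
      Function.Injective f ∧ LinearMap.range f = Submodule.torsionBySet R A (Ideal.ofList rs) := by
  let P := ProjectiveResolution.self (ModuleCat.of R R)
  have hP (j : ℕ) (hj : 0 < j) : Limits.IsZero (P.complex.X j) :=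
    HomologicalComplex.isZero_single_obj_X _ _ _ _ hj.ne'
  obtain ⟨f, hf, hf_range⟩ := exists_injective_tor_of_isWeaklyRegular A P hP hrs
  let e₀ : ((Tor (ModuleCat.{u} R) 0).obj A).obj (ModuleCat.of R R) ≃ₗ[R] A :=
    (((tensoringLeft (ModuleCat.{u} R)).obj A).leftDerivedZeroIsoSelf.app _ ≪≫ ρ_ A).toLinearEquiv
  let e := torCongr A rs.length (Submodule.quotEquivOfEq (Ideal.ofList rs) (Ideal.ofList rs • ⊤)
    (ofList_smul_top rs).symm)
  refine ⟨(e₀.toLinearMap ∘ₗ f) ∘ₗ e.toLinearMap,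
    (e₀.injective.comp hf).comp e.injective, ?_⟩
  rw [LinearMap.range_comp_of_range_eq_top _ (LinearEquiv.range e),
    range_comp_eq_torsionBySet_union e₀.injective hf_range
      ((LinearEquiv.range e₀).trans (torsionBySet_empty A).symm),
    Set.empty_union, Submodule.torsionBySet_eq_torsionBySet_span]

end Tor


section Variables

variable {σ k : Type*} [CommRing k]

lemma mem_span_X_image_of_X_mul_mem {s : Set σ} {i : σ} (hi : i ∉ s)
    {p : MvPolynomial σ k} (hp : X i * p ∈ Ideal.span (X '' s : Set (MvPolynomial σ k))) :
    p ∈ Ideal.span (X '' s : Set (MvPolynomial σ k)) := by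
  rw [mem_ideal_span_X_image] at hp ⊢
  intro m hm
  have hm' : Finsupp.single i 1 + m ∈ (X i * p).support := by
    rwa [mem_support_iff, coeff_X_mul, ← mem_support_iff]
  obtain ⟨j, hj, hj'⟩ := hp _ hm'
  have hij : i ≠ j := fun h => hi (h ▸ hj)
  exact ⟨j, hj, by simpa [hij] using hj'⟩

lemma isWeaklyRegular_map_X {is : List σ} (his : is.Nodup) :
    RingTheory.Sequence.IsWeaklyRegular (MvPolynomial σ k)
      (is.map (X : σ → MvPolynomial σ k)) := by
  refine (RingTheory.Sequence.isWeaklyRegular_iff _ _).2 fun j hj => ?_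
  have hj' : j < is.length := by rwa [List.length_map] at hj
  have hmem : is[j] ∉ is.take j := fun h =>
    List.disjoint_take_drop his le_rfl h (List.mem_drop_iff_getElem.2 ⟨0, by simpa, by simp⟩)
  have hspan : Ideal.ofList ((is.map (X : σ → MvPolynomial σ k)).take j) =
      Ideal.span (X '' {i | i ∈ is.take j}) := by
    rw [← List.map_take, Ideal.ofList]
    simp only [List.mem_map, Set.image, Set.mem_ofPred_eq]
  rw [isSMulRegular_quotient_iff_mem_of_smul_mem, ofList_smul_top, hspan, List.getElem_map]
  exact fun _ => mem_span_X_image_of_X_mul_mem (s := {i | i ∈ is.take j}) hmem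

lemma ofList_map_X_finRange (N : ℕ) (k : Type*) [CommRing k] :
    Ideal.ofList ((List.finRange N).map (X : _ → MvPolynomial (Fin N) k)) =
      Ideal.span (Set.range X) := by
  simp [Ideal.ofList, Set.range]

end Variables

section Socle

variable {N : ℕ} (k : Type) [Field k]

/-- The socle of `S/M`, i.e. the classes annihilated by every variable. -/
noncomputable abbrev socleQuot (M : Ideal (MvPolynomial (Fin N) k)) :
    Submodule (MvPolynomial (Fin N) k) (MvPolynomial (Fin N) k ⧸ M) :=
  Submodule.torsionBySet _ _
    (Ideal.span (Set.range X) : Ideal (MvPolynomial (Fin N) k))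

lemma mk_mem_socleQuot_iff {M : Ideal (MvPolynomial (Fin N) k)} {p : MvPolynomial (Fin N) k} :
    Ideal.Quotient.mk M p ∈ socleQuot k M ↔ ∀ i, X i * p ∈ M := by
  rw [socleQuot, ← Submodule.torsionBySet_eq_torsionBySet_span,
    Submodule.mem_torsionBySet_iff]
  simp only [Subtype.forall, Set.forall_mem_range]
  exact forall_congr' fun _ => Ideal.Quotient.eq_zero_iff_mem

lemma finrank_restrictScalars_obj {K S : Type*} [Field K] [CommRing S] [Algebra K S]
    (W : ModuleCat S) {T : Type*} [AddCommGroup T] [Module S T] [Module K T] [IsScalarTower K S T]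
    {f : W →ₗ[S] T} (hf : Function.Injective f) :
    Module.finrank K ((ModuleCat.restrictScalars (algebraMap K S)).obj W) =
      Module.finrank K ((LinearMap.range f).restrictScalars K) :=
  LinearEquiv.finrank_eq { (LinearEquiv.ofInjective f hf).toAddEquiv with
    map_smul' := fun c x => Subtype.ext <| by
      exact (f.map_smul (algebraMap K S c) x).trans (algebraMap_smul S c (f x)) }

lemma betti_eq_finrank_socleQuot (M : Ideal (MvPolynomial (Fin N) k)) :
    betti k M N = Module.finrank k ((socleQuot k M).restrictScalars k) := by
  have h := exists_injective_tor_quotient_ofList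
    (ModuleCat.of (MvPolynomial (Fin N) k) (MvPolynomial (Fin N) k ⧸ M))
    (isWeaklyRegular_map_X (List.nodup_finRange N))
  rw [List.length_map, List.length_finRange, ofList_map_X_finRange] at h
  obtain ⟨f, hf, hf_range⟩ := h
  rw [betti, finrank_restrictScalars_obj _ hf, hf_range]

end Socle

section StandardExponents

variable {ι : Type*}

/-- The exponent vectors of the standard monomials of the monomial ideal with generating
exponents `A`, i.e. of the monomials outside the ideal. -/
def stdExp (A : Set (ι → ℕ)) : Set (ι → ℕ) := {m | ∀ a ∈ A, ¬a ≤ m}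

lemma isLowerSet_stdExp (A : Set (ι → ℕ)) : IsLowerSet (stdExp A) :=
  fun _ _ hba ha c hc hcb => ha c hc (hcb.trans hba)

variable [DecidableEq ι]

lemma maximal_mem_iff_of_isLowerSet {s : Set (ι → ℕ)} (hs : IsLowerSet s) {m : ι → ℕ} :
    Maximal (· ∈ s) m ↔ m ∈ s ∧ ∀ i, m + Pi.single i 1 ∉ s := by
  constructor
  · intro hm
    refine ⟨hm.prop, fun i hi => ?_⟩
    have hle : m i + 1 ≤ m i := by
      simpa using hm.le_of_ge hi (le_add_of_nonneg_right (Pi.single_nonneg.2 zero_le_one)) i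
    omega
  · rintro ⟨hm, h⟩
    refine ⟨hm, fun b hb hmb i => ?_⟩
    by_contra! hi
    refine h i (hs (fun j => ?_) hb)
    rcases eq_or_ne j i with rfl | hji
    · simpa using hi
    · simpa [hji] using hmb j

lemma single_le_iff_le_apply {i : ι} {e : ℕ} {m : ι → ℕ} : Pi.single i e ≤ m ↔ e ≤ m i := by
  simp [Pi.single, update_le_iff]

lemma finite_stdExp [Finite ι] {A : Set (ι → ℕ)} (hA : ∀ i, ∃ e, Pi.single i e ∈ A) :
    (stdExp A).Finite := by
  cases nonempty_fintype ι
  choose e he using hA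
  refine (Set.finite_Icc 0 e).subset fun m hm => ⟨zero_le, fun i => ?_⟩
  by_contra! hi
  exact hm _ (he i) (single_le_iff_le_apply.2 hi.le)

lemma sub_single_mem_stdExp {A : Set (ι → ℕ)} {g : ι → ℕ} (hg : Minimal (· ∈ A) g) {i : ι}
    (hi : 0 < g i) : g - Pi.single i 1 ∈ stdExp A := by
  intro a ha hag
  have hga : g i ≤ a i := hg.le_of_le ha (hag.trans tsub_le_self) i
  have hag' : a i ≤ g i - 1 := by simpa using hag i
  omega

lemma two_le_ncard_maximal_mem_stdExp [Finite ι] {A : Set (ι → ℕ)}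
    (hA : ∀ i, ∃ e, Pi.single i e ∈ A) {g : ι → ℕ} (hg : Minimal (· ∈ A) g) {i j : ι}
    (hij : i ≠ j) (hi : 0 < g i) (hj : 0 < g j) :
    2 ≤ {m | Maximal (· ∈ stdExp A) m}.ncard := by
  have hfin := finite_stdExp hA
  obtain ⟨m, hgm, hm⟩ := hfin.exists_le_maximal (sub_single_mem_stdExp hg hi)
  obtain ⟨m', hgm', hm'⟩ := hfin.exists_le_maximal (sub_single_mem_stdExp hg hj)
  refine (Set.one_lt_ncard_iff (hfin.subset fun _ h => h.prop)).2 ⟨m, m', hm, hm', ?_⟩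
  rintro rfl
  refine hm.prop g hg.prop fun l => ?_
  rcases eq_or_ne l i with rfl | hl
  · simpa [hij] using hgm' l
  · simpa [hl] using hgm l

lemma exists_ne_pos_of_forall_ne_single [Nonempty ι] {g : ι → ℕ}
    (hg : ∀ i e, g ≠ Pi.single i e) : ∃ i j, i ≠ j ∧ 0 < g i ∧ 0 < g j := by
  have hg0 : g ≠ 0 := fun h => hg (Classical.arbitrary ι) 0 (by rw [h, Pi.single_zero])
  obtain ⟨i, hi⟩ := Function.ne_iff.1 hg0
  obtain ⟨j, hj⟩ := Function.ne_iff.1 (hg i (g i))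
  have hji : j ≠ i := by
    rintro rfl
    exact hj (by rw [Pi.single_eq_same])
  rw [Pi.single_eq_of_ne hji] at hj
  exact ⟨i, j, hji.symm, Nat.pos_of_ne_zero hi, Nat.pos_of_ne_zero hj⟩

lemma exists_mem_forall_ne_single_of_card_lt [Fintype ι] {G : Finset (ι → ℕ)}
    (hG : IsAntichain (· ≤ ·) (G : Set (ι → ℕ))) (hsingle : ∀ i, ∃ e, Pi.single i e ∈ G)
    (hcard : Fintype.card ι < G.card) : ∃ g ∈ G, ∀ i e, g ≠ Pi.single i e := by
  choose α hα using hsingle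
  obtain ⟨g, hgG, hg⟩ := Finset.exists_mem_notMem_of_card_lt_card
    ((Finset.card_image_le (s := .univ) (f := fun i => Pi.single i (α i))).trans_lt hcard)
  refine ⟨g, hgG, ?_⟩
  rintro i e rfl
  refine hg (Finset.mem_image.2 ⟨i, Finset.mem_univ i, ?_⟩)
  rcases le_total e (α i) with h | h
  · exact (hG.eq hgG (hα i) (Pi.single_mono i h)).symm
  · exact hG.eq (hα i) hgG (Pi.single_mono i h)

end StandardExponents

section MonomialIdeal

variable {N : ℕ} {A : Set (Fin N → ℕ)} (k : Type) [Field k]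

lemma mem_monIdeal_iff {p : MvPolynomial (Fin N) k} :
    p ∈ monIdeal k A ↔ ∀ m : Fin N →₀ ℕ, ⇑m ∈ stdExp A → coeff m p = 0 := by
  have h : monIdeal k A = Ideal.span ((fun s => monomial s (1 : k)) ''
      (Finsupp.equivFunOnFinite.symm '' A)) := by
    rw [monIdeal, Set.image_image]
    rfl
  rw [h, mem_ideal_span_monomial_image]
  refine forall_congr' fun m => ?_
  rw [mem_support_iff, Set.exists_mem_image, ← not_imp_comm]
  refine imp_congr_left ?_
  simp only [not_exists, not_and]
  rfl

lemma X_mul_mem_monIdeal_iff {p : MvPolynomial (Fin N) k} (i : Fin N) :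
    X i * p ∈ monIdeal k A ↔
      ∀ m : Fin N →₀ ℕ, ⇑m + Pi.single i 1 ∈ stdExp A → coeff m p = 0 := by
  rw [mem_monIdeal_iff]
  constructor
  · intro h m hm
    rw [← coeff_X_mul m i]
    refine h _ ?_
    rwa [add_comm, Finsupp.coe_add, Finsupp.single_eq_pi_single]
  · intro h m hm
    rw [coeff_X_mul']
    split_ifs with hi
    · refine h _ ?_
      rw [← Finsupp.single_eq_pi_single, ← Finsupp.coe_add, tsub_add_cancel_of_le]
      · exact hm
      · simpa [Nat.one_le_iff_ne_zero] using hi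
    · rfl

lemma mk_mem_socleQuot_monIdeal_iff {p : MvPolynomial (Fin N) k} :
    Ideal.Quotient.mk (monIdeal k A) p ∈ socleQuot k (monIdeal k A) ↔
      ∀ m : Fin N →₀ ℕ, ⇑m ∈ stdExp A → ¬Maximal (· ∈ stdExp A) ⇑m → coeff m p = 0 := by
  simp only [mk_mem_socleQuot_iff, X_mul_mem_monIdeal_iff,
    maximal_mem_iff_of_isLowerSet (isLowerSet_stdExp A)]
  constructor
  · intro h m hm hmax
    obtain ⟨i, hi⟩ : ∃ i, ⇑m + Pi.single i 1 ∈ stdExp A := by simpa [hm] using hmax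
    exact h i m hi
  · intro h i m hm
    exact h m (isLowerSet_stdExp A (by simp) hm) fun hmax => hmax.2 i hm

lemma mem_restrictSupport_iff_coeff {σ R : Type*} [CommSemiring R] {s : Set (σ →₀ ℕ)}
    {p : MvPolynomial σ R} : p ∈ restrictSupport R s ↔ ∀ m, m ∉ s → coeff m p = 0 := by
  simp only [mem_restrictSupport_iff, Set.subset_def, Finset.mem_coe, mem_support_iff]
  exact forall_congr' fun m => not_imp_comm

lemma exists_mem_restrictSupport_coeff_eq {σ R : Type*} [CommSemiring R] (s : Set (σ →₀ ℕ))
    (p : MvPolynomial σ R) : ∃ p' ∈ restrictSupport R s, ∀ m ∈ s, coeff m p' = coeff m p := by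
  classical
  refine ⟨∑ m ∈ p.support with m ∈ s, monomial m (coeff m p), ?_, fun m hm => ?_⟩
  · exact sum_mem fun m hm =>
      (monomial_mem_restrictSupport R).2 (.inl (Finset.mem_filter.1 hm).2)
  · simp +contextual [coeff_sum, coeff_monomial, hm]

variable (A)

/-- The `k`-linear map from the span of the maximal standard monomials to `S/M`, a
parametrization of the socle. -/
noncomputable def maximalStdToQuot :
    restrictSupport k {m : Fin N →₀ ℕ | Maximal (· ∈ stdExp A) ⇑m} →ₗ[k]
      MvPolynomial (Fin N) k ⧸ monIdeal k A :=
  (Ideal.Quotient.mkₐ k (monIdeal k A)).toLinearMap ∘ₗ Submodule.subtype _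

lemma maximalStdToQuot_injective : Function.Injective (maximalStdToQuot A k) := by
  refine (injective_iff_map_eq_zero _).2 fun ⟨p, hp⟩ h =>
    Subtype.ext (MvPolynomial.ext _ _ fun m => ?_)
  by_cases hm : ⇑m ∈ stdExp A
  · exact (mem_monIdeal_iff k).1 (Ideal.Quotient.eq_zero_iff_mem.1 h) m hm
  · exact mem_restrictSupport_iff_coeff.1 hp m fun hmax => hm hmax.prop

lemma range_maximalStdToQuot :
    LinearMap.range (maximalStdToQuot A k) =
      (socleQuot k (monIdeal k A)).restrictScalars k := by
  ext x
  constructor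
  · rintro ⟨⟨p, hp⟩, rfl⟩
    exact (mk_mem_socleQuot_monIdeal_iff k).2 fun m _ hm =>
      mem_restrictSupport_iff_coeff.1 hp m hm
  · intro hx
    obtain ⟨p, rfl⟩ := Ideal.Quotient.mk_surjective x
    obtain ⟨p', hp', hcoeff⟩ :=
      exists_mem_restrictSupport_coeff_eq {m | Maximal (· ∈ stdExp A) ⇑m} p
    refine ⟨⟨p', hp'⟩, Ideal.Quotient.eq.2 ((mem_monIdeal_iff k).2 fun m hm => ?_)⟩
    change coeff m (p' - p) = 0
    rw [coeff_sub, sub_eq_zero]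
    by_cases hmax : Maximal (· ∈ stdExp A) ⇑m
    · exact hcoeff m hmax
    · rw [mem_restrictSupport_iff_coeff.1 hp' m hmax,
        (mk_mem_socleQuot_monIdeal_iff k).1 hx m hm hmax]

lemma betti_monIdeal_eq_ncard_maximal :
    betti k (monIdeal k A) N = {m | Maximal (· ∈ stdExp A) m}.ncard := by
  rw [betti_eq_finrank_socleQuot, ← range_maximalStdToQuot,
    LinearMap.finrank_range_of_inj (maximalStdToQuot_injective A k),
    Module.finrank_eq_nat_card_basis (basisRestrictSupport k _)]
  exact Nat.card_congr (Finsupp.equivFunOnFinite.subtypeEquiv fun _ => Iff.rfl)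

end MonomialIdeal

theorem bettiN_ge_two_of_pure_powers_and_extra_gens_general {n : ℕ} (k : Type) [Field k]
    {G : Finset (Fin (n + 1) → ℕ)} (hG : IsAntichain (· ≤ ·) (G : Set (Fin (n + 1) → ℕ)))
    (hsingle : ∀ i, ∃ e, Pi.single i e ∈ G) (hcard : n + 1 < G.card) :
    2 ≤ betti k (monIdeal k (G : Set (Fin (n + 1) → ℕ))) (n + 1) := by
  obtain ⟨g, hgG, hg⟩ := exists_mem_forall_ne_single_of_card_lt hG hsingle (by simpa using hcard)
  obtain ⟨i, j, hij, hi, hj⟩ := exists_ne_pos_of_forall_ne_single hg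
  rw [betti_monIdeal_eq_ncard_maximal]
  exact two_le_ncard_maximal_mem_stdExp hsingle (hG.minimal_mem_iff.2 hgG) hij hi hj

/-- Lemma 6.9: if `M` is minimally generated by exactly
`G = {x_1^{α_1},…,x_n^{α_n}, l_1,…,l_q}` with `q ≥ 1`, all `α_i ≥ 1`, and each `l_j`
divisible by the last variable `x_n`, then `β_n(S/M) ≥ 2`.  (Here the number of variables is
`n + 1` in Lean's indexing, so `x_n` is `X (Fin.last n)`.) -/
theorem bettiN_ge_two_of_pure_powers_and_extra_gens (n q : ℕ) (hq : 1 ≤ q) (k : Type) [Field k]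
    (α : Fin (n + 1) → ℕ) (hα : ∀ i, 0 < α i)
    (l : Fin q → (Fin (n + 1) → ℕ)) (hl : ∀ j, 0 < l j (Fin.last n))
    (G : Finset (Fin (n + 1) → ℕ))
    (hG : G = (Finset.univ.image fun i : Fin (n + 1) => Pi.single i (α i)) ∪
        Finset.univ.image l)
    (hcardG : G.card = (n + 1) + q)
    (M : Ideal (MvPolynomial (Fin (n + 1)) k)) (hgen : M = monIdeal k ↑G)
    (hmin : ∀ a ∈ G, ∀ b ∈ G, a ≠ b → ¬a ≤ b) :
    2 ≤ betti k M (n + 1) := by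
  subst hgen
  exact bettiN_ge_two_of_pure_powers_and_extra_gens_general k (fun a ha b hb => hmin a ha b hb)
    (fun i => ⟨α i, by simp [hG]⟩) (by omega)
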